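/- Let d ≥ 2 be an integer, 0<p<1, and let r_{n,k} be the root-cluster weights for random increasing d-ary trees (φ(δ)=d!/(d-δ)! for 0≤δ≤d, φ(δ)=0 for δ>d). Then for every fixed integer k ≥ 1, the probability that the root cluster has exactly k vertices converges: lim_{n→∞} r_{n,k}/b_n = (1/k)·C(kd, k-1)·p^{k-1}·(1-p)^{kd-k+1}, the probability that a Galton–Watson tree with Binomial(d,p) offspring distribution has total progeny exactly k. -/

import Mathlib

open Finset Filter Asymptotics

/-- The root-cluster weight recursion. -/
noncomputable def clusterRec (p : ℝ) (φ : ℕ → ℝ) (r : ℕ → ℕ → ℝ) (b : ℕ → ℝ) : Prop :=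
  (∀ m, b m = ∑ k ∈ Finset.Icc 1 m, r m k) ∧
  ∀ n k : ℕ, 1 ≤ n → 1 ≤ k →
    r n k =
      ∑ δ ∈ Finset.range n, ∑ s ∈ (Finset.range (δ + 1)).attach,
        (δ.choose s.1 : ℝ) * (φ δ / (δ.factorial : ℝ)) *
          ∑ f ∈ (Finset.Nat.antidiagonalTuple δ (n - 1)).filter (fun f => ∀ i, 1 ≤ f i),
            (((n - 1).factorial : ℝ) / ∏ i, ((f i).factorial : ℝ)) *
              ∑ g ∈ (Finset.Nat.antidiagonalTuple s.1 (k - 1)).filter (fun g => ∀ i, 1 ≤ g i),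
                p ^ s.1 * (1 - p) ^ (δ - s.1) *
                  (∏ i : Fin s.1,
                    r (f (Fin.castLE (Nat.lt_succ_iff.mp (Finset.mem_range.mp s.2)) i)) (g i)) *
                  ∏ j ∈ Finset.univ.filter (fun j : Fin δ => s.1 ≤ (j : ℕ)), b (f j)

/-- Partial Bell polynomials. -/
noncomputable def bellPartial (k j : ℕ) (x : ℕ → ℝ) : ℝ :=
  ∑ m ∈ (Fintype.piFinset (fun _ : Fin (k - j + 1) => Finset.range (k + 1))).filter
      (fun m : Fin (k - j + 1) → ℕ => (∑ i : Fin (k - j + 1), ((i : ℕ) + 1) * m i) = k ∧ (∑ i, m i) = j),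
    (k.factorial : ℝ) *
      ∏ i : Fin (k - j + 1), x ((i : ℕ) + 1) ^ m i /
        (((m i).factorial : ℝ) * (((i : ℕ) + 1).factorial : ℝ) ^ m i)


lemma H_ode (e : ℕ) (H : PowerSeries ℝ) (h0 : PowerSeries.constantCoeff H = 1)
    (hH : PowerSeries.derivative ℝ H = H ^ (e+1)) :
    H ^ e * (1 - PowerSeries.C (e:ℝ) * PowerSeries.X) = 1 := by
  have hc : PowerSeries.constantCoeff (H ^ e) = 1 := by simp [h0]
  have hne : PowerSeries.constantCoeff (H ^ e) ≠ 0 := by rw [hc]; exact one_ne_zero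
  have hG : PowerSeries.derivative ℝ (H ^ e) = PowerSeries.C (e:ℝ) * (H ^ e)^2 := by
    rw [PowerSeries.derivative_pow, hH]
    rcases e with _ | e
    · simp
    · simp only [map_natCast, Nat.add_sub_cancel]; ring
  have hmul : H ^ e * (H ^ e)⁻¹ = 1 := PowerSeries.mul_inv_cancel _ hne
  have : (H ^ e)⁻¹ = 1 - PowerSeries.C (e:ℝ) * PowerSeries.X := by
    apply PowerSeries.derivative.ext
    · rw [PowerSeries.derivative_inv', hG]
      simp only [map_sub, PowerSeries.derivative_one, Derivation.leibniz, PowerSeries.derivative_C, PowerSeries.derivative_X, smul_eq_mul]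
      linear_combination (-PowerSeries.C (e:ℝ)) * (H ^ e * (H ^ e)⁻¹ + 1) * hmul
    · simp [h0]
  rw [← this, hmul]

lemma H_rec (e : ℕ) (H : PowerSeries ℝ) (h0 : PowerSeries.constantCoeff H = 1)
    (hH : PowerSeries.derivative ℝ H = H ^ (e+1)) (m n : ℕ) :
    PowerSeries.coeff (n+1) (H ^ m) * (n+1) = (m + e * n) * PowerSeries.coeff n (H ^ m) := by
  have h1 := H_ode e H h0 hH
  have h2 : PowerSeries.derivative ℝ (H ^ m) * (1 - PowerSeries.C (e:ℝ) * PowerSeries.X)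
      = PowerSeries.C (m:ℝ) * H ^ m := by
    rw [PowerSeries.derivative_pow, hH]
    rcases m with _ | m
    · simp
    · simp only [map_natCast, Nat.add_sub_cancel] at h1 ⊢
      linear_combination ((m+1 : ℕ) * H ^ (m+1) : PowerSeries ℝ) * h1
  have h3 := congrArg (PowerSeries.coeff n) h2
  rw [PowerSeries.coeff_C_mul, mul_sub, map_sub, mul_one, PowerSeries.coeff_derivative] at h3
  have h4 : PowerSeries.coeff n (PowerSeries.derivative ℝ (H ^ m) * (PowerSeries.C (e:ℝ) * PowerSeries.X)) = e * n * PowerSeries.coeff n (H ^ m) := by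
    rcases n with _ | n
    · simp
    · rw [mul_left_comm, PowerSeries.coeff_C_mul, PowerSeries.coeff_succ_mul_X, PowerSeries.coeff_derivative]
      push_cast; ring
  rw [h4] at h3
  linarith

lemma H_ge (e : ℕ) (he : 1 ≤ e) (H : PowerSeries ℝ) (h0 : PowerSeries.constantCoeff H = 1)
    (hH : PowerSeries.derivative ℝ H = H ^ (e+1)) (m : ℕ) (hm : 1 ≤ m) :
    (∀ n, 0 < PowerSeries.coeff n (H ^ m)) ∧ Monotone (fun n => PowerSeries.coeff n (H ^ m)) := by
  have he' : (1:ℝ) ≤ e := by exact_mod_cast he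
  have hm' : (1:ℝ) ≤ m := by exact_mod_cast hm
  have hpos : ∀ n, 0 < PowerSeries.coeff n (H ^ m) := by
    intro n
    induction n with
    | zero => simp [h0]
    | succ n ih =>
      have := H_rec e H h0 hH m n
      have h5 : 0 < (m + e * n) * PowerSeries.coeff n (H ^ m) := by positivity
      rw [← this] at h5
      exact pos_of_mul_pos_left h5 (by positivity)
  refine ⟨hpos, monotone_nat_of_le_succ fun n => ?_⟩
  have := H_rec e H h0 hH m n
  have h6 : ((n:ℝ)+1) ≤ m + e * n := by nlinarith [Nat.cast_nonneg (α := ℝ) n]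
  have h7 := mul_le_mul_of_nonneg_right h6 (hpos n).le
  rw [← this, mul_comm] at h7
  exact le_of_mul_le_mul_right h7 (by positivity)

lemma H_lit (e : ℕ) (he : 1 ≤ e) (H : PowerSeries ℝ) (h0 : PowerSeries.constantCoeff H = 1)
    (hH : PowerSeries.derivative ℝ H = H ^ (e+1)) (m : ℕ) (hm : 1 ≤ m) :
    Tendsto (fun n => PowerSeries.coeff n (H ^ m) / PowerSeries.coeff n (H ^ (m+1))) atTop (nhds 0) := by
  obtain ⟨hp, -⟩ := H_ge e he H h0 hH m hm
  obtain ⟨hq, -⟩ := H_ge e he H h0 hH (m+1) (by omega)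
  have hm' : (1:ℝ) ≤ m := by exact_mod_cast hm
  have key : ∀ n, PowerSeries.coeff n (H ^ m) * (1 + (1/((m:ℝ)+e)) * ∑ i ∈ range n, 1/((i:ℝ)+1)) ≤
      PowerSeries.coeff n (H ^ (m+1)) := by
    intro n
    induction n with
    | zero => simp [h0]
    | succ n ih =>
      have e1 := H_rec e H h0 hH m n
      have e2 := H_rec e H h0 hH (m+1) n
      set S := ∑ i ∈ range n, 1/((i:ℝ)+1) with hS
      have hS0 : 0 ≤ S := Finset.sum_nonneg fun i _ => by positivity
      rw [sum_range_succ, ← hS]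
      have hn : (0:ℝ) < n + 1 := by positivity
      refine le_of_mul_le_mul_right ?_ hn
      rw [e2, mul_right_comm, e1]
      push_cast
      set A := PowerSeries.coeff n (H ^ m)
      set B := PowerSeries.coeff n (H ^ (m+1))
      have hA : 0 < A := hp n
      have h8 : (m + 1 + e * n) * (A * (1 + (1/((m:ℝ)+e)) * S)) ≤ ((m:ℝ) + 1 + e * n) * B :=
        mul_le_mul_of_nonneg_left ih (by positivity)
      refine le_trans ?_ h8
      have h9 : (m + e * n) * (1/((m:ℝ)+e) * (1/((n:ℝ)+1))) ≤ 1 := by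
        rw [one_div_mul_one_div, mul_one_div, div_le_one (by positivity)]
        nlinarith [Nat.cast_nonneg (α := ℝ) n, Nat.cast_nonneg (α := ℝ) e]
      have h10 : 0 ≤ (1/((m:ℝ)+e)) * S := by positivity
      nlinarith [mul_le_mul_of_nonneg_left h9 hA.le, mul_nonneg hA.le h10]
  have t1 : Tendsto (fun n => (1 + (1/((m:ℝ)+e)) * ∑ i ∈ range n, 1/((i:ℝ)+1))) atTop atTop :=
    tendsto_atTop_add_const_left _ _
      (Real.tendsto_sum_range_one_div_nat_succ_atTop.const_mul_atTop (by positivity))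
  refine squeeze_zero (fun n => (div_pos (hp n) (hq n)).le) (fun n => ?_) t1.inv_tendsto_atTop
  have hS0 : 0 ≤ ∑ i ∈ range n, 1/((i:ℝ)+1) := Finset.sum_nonneg fun i _ => by positivity
  have : 0 < (1 + (1/((m:ℝ)+e)) * ∑ i ∈ range n, 1/((i:ℝ)+1)) := by positivity
  rw [Pi.inv_apply, div_le_iff₀ (hq n), inv_mul_eq_div, le_div_iff₀ this]
  exact key n

lemma conv_lit (x y z a v : ℕ → ℝ) (C : ℝ) (hx : ∀ n, 0 < x n) (hy : ∀ n, 0 < y n)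
    (hz : ∀ n, z n = ∑ ij ∈ antidiagonal n, x ij.1 * y ij.2) (hym : Monotone y)
    (hyz : Tendsto (fun n => y n / z n) atTop (nhds 0))
    (ha : Tendsto (fun n => a n / x n) atTop (nhds 0)) (hv : ∀ n, |v n| ≤ C * y n) :
    Tendsto (fun n => (∑ ij ∈ antidiagonal n, a ij.1 * v ij.2) / z n) atTop (nhds 0) := by
  have hC : 0 ≤ C := by
    have := (abs_nonneg _).trans (hv 0)
    exact nonneg_of_mul_nonneg_left this (hy 0)
  have hzp : ∀ n, 0 < z n := fun n => by
    rw [hz]; exact sum_pos (fun ij _ => mul_pos (hx _) (hy _)) ⟨(0,n), by simp⟩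
  rw [Metric.tendsto_atTop]
  intro ε hε
  set η := ε / (2 * (C+1)) with hη
  have hηp : 0 < η := by positivity
  rw [Metric.tendsto_atTop] at ha
  obtain ⟨N, hN⟩ := ha η hηp
  set D := ∑ i ∈ range N, |a i| with hD
  have hD0 : 0 ≤ D := sum_nonneg fun i _ => abs_nonneg _
  have hbd : ∀ i, |a i| ≤ η * x i + if i < N then D else 0 := by
    intro i
    split_ifs with h
    · have : |a i| ≤ D := single_le_sum (f := fun i => |a i|) (fun i _ => abs_nonneg _) (mem_range.2 h)
      have := mul_pos hηp (hx i)
      linarith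
    · have := hN i (by omega)
      rw [Real.dist_eq, sub_zero, abs_div, abs_of_pos (hx i), div_lt_iff₀ (hx i)] at this
      linarith
  have main : ∀ n, |∑ ij ∈ antidiagonal n, a ij.1 * v ij.2| ≤ η * C * z n + N * (D * C) * y n := by
    intro n
    calc |∑ ij ∈ antidiagonal n, a ij.1 * v ij.2| ≤ ∑ ij ∈ antidiagonal n, |a ij.1 * v ij.2| := abs_sum_le_sum_abs _ _
      _ ≤ ∑ ij ∈ antidiagonal n, (η * C * (x ij.1 * y ij.2) + if ij.1 < N then D * C * y n else 0) := by
        refine sum_le_sum fun ij hij => ?_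
        rw [abs_mul]
        have h1 := mul_le_mul (hbd ij.1) (hv ij.2) (abs_nonneg _) ((abs_nonneg _).trans (hbd ij.1))
        refine h1.trans ?_
        have h2 : y ij.2 ≤ y n := hym (by rw [HasAntidiagonal.mem_antidiagonal] at hij; omega)
        split_ifs
        · have := mul_le_mul_of_nonneg_left h2 (mul_nonneg hD0 hC)
          linarith
        · apply le_of_eq; ring
      _ = η * C * z n + ∑ ij ∈ antidiagonal n, if ij.1 < N then D * C * y n else 0 := by
        rw [sum_add_distrib, ← mul_sum, hz]
      _ ≤ _ := by
        gcongr
        rw [Nat.sum_antidiagonal_eq_sum_range_succ_mk, ← sum_filter, sum_const, nsmul_eq_mul, mul_assoc (N:ℝ)]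
        have : 0 ≤ D * C * y n := mul_nonneg (mul_nonneg hD0 hC) (hy n).le
        refine mul_le_mul_of_nonneg_right ?_ this
        have hsub : (filter (fun i => i < N) (range n.succ)) ⊆ range N := fun i hi => by
          simp at hi ⊢; omega
        exact_mod_cast (card_le_card hsub).trans (by simp)
  have t := hyz.const_mul (N * (D * C))
  rw [mul_zero, Metric.tendsto_atTop] at t
  obtain ⟨M, hM⟩ := t (ε/2) (by positivity)
  refine ⟨M, fun n hn => ?_⟩
  have h1 := hM n hn
  rw [Real.dist_eq, sub_zero] at h1 ⊢
  have h2 := lt_of_le_of_lt (le_abs_self _) h1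
  rw [abs_div, abs_of_pos (hzp n), div_lt_iff₀ (hzp n)]
  refine (main n).trans_lt ?_
  rw [mul_div_assoc', div_lt_iff₀ (hzp n)] at h2
  have h3 : η * C ≤ ε / 2 := by
    rw [hη, div_mul_eq_mul_div, div_le_div_iff₀ (by positivity) (by positivity)]
    nlinarith
  have := mul_le_mul_of_nonneg_right h3 (hzp n).le
  linarith

lemma bdd_of_tendsto (x u : ℕ → ℝ) (α : ℝ) (hx : ∀ n, 0 < x n)
    (hu : Tendsto (fun n => u n / x n) atTop (nhds α)) : ∃ C, ∀ n, |u n| ≤ C * x n := by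
  obtain ⟨C, hC⟩ := (Metric.isBounded_range_of_tendsto _ hu).exists_norm_le
  refine ⟨C, fun n => ?_⟩
  have := hC _ ⟨n, rfl⟩
  rwa [Real.norm_eq_abs, abs_div, abs_of_pos (hx n), div_le_iff₀ (hx n)] at this

lemma conv_asym (x y z u v : ℕ → ℝ) (α β : ℝ) (hx : ∀ n, 0 < x n) (hy : ∀ n, 0 < y n)
    (hz : ∀ n, z n = ∑ ij ∈ antidiagonal n, x ij.1 * y ij.2) (hxm : Monotone x) (hym : Monotone y)
    (hxz : Tendsto (fun n => x n / z n) atTop (nhds 0))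
    (hyz : Tendsto (fun n => y n / z n) atTop (nhds 0))
    (hu : Tendsto (fun n => u n / x n) atTop (nhds α))
    (hv : Tendsto (fun n => v n / y n) atTop (nhds β)) :
    Tendsto (fun n => (∑ ij ∈ antidiagonal n, u ij.1 * v ij.2) / z n) atTop (nhds (α * β)) := by
  have hzp : ∀ n, 0 < z n := fun n => by
    rw [hz]; exact sum_pos (fun ij _ => mul_pos (hx _) (hy _)) ⟨(0,n), by simp⟩
  have sub : ∀ (x u : ℕ → ℝ) (α : ℝ), (∀ n, 0 < x n) → Tendsto (fun n => u n / x n) atTop (nhds α) →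
      Tendsto (fun n => (u n - α * x n) / x n) atTop (nhds 0) := by
    intro x u α hx hu
    have := hu.sub_const α
    rw [sub_self] at this
    refine this.congr fun n => ?_
    rw [sub_div, mul_div_cancel_right₀ _ (hx n).ne']
  obtain ⟨C, hC⟩ := bdd_of_tendsto y v β hy hv
  have t1 := conv_lit x y z _ v C hx hy hz hym hyz (sub x u α hx hu) hC
  have hz' : ∀ n, z n = ∑ ij ∈ antidiagonal n, y ij.1 * x ij.2 := fun n => by
    rw [hz, ← Finset.Nat.sum_antidiagonal_swap]
    exact sum_congr rfl fun ij _ => by simp [mul_comm]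
  have t2 := conv_lit y x z _ x 1 hy hx hz' hxm hxz (sub y v β hy hv) (fun n => by rw [abs_of_pos (hx n), one_mul])
  have t3 := (t1.add (t2.const_mul α)).add_const (α * β)
  simp only [mul_zero, zero_add] at t3
  refine t3.congr fun n => ?_
  have h0 : ∑ ij ∈ antidiagonal n, (v ij.1 - β * y ij.1) * x ij.2 =
      ∑ ij ∈ antidiagonal n, (v ij.2 - β * y ij.2) * x ij.1 := by
    rw [← Finset.Nat.sum_antidiagonal_swap]
    exact sum_congr rfl fun ij _ => by simp
  rw [h0, mul_div_assoc', ← add_div, div_add' _ _ _ (hzp n).ne', hz n, mul_sum, mul_sum, ← sum_add_distrib, ← sum_add_distrib]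
  congr 1
  exact sum_congr rfl fun ij _ => by ring

/-- coefficientwise asymptotics -/
def Asy (H : PowerSeries ℝ) (F : PowerSeries (Polynomial ℝ)) (m : ℕ) (q : PowerSeries ℝ) (K : ℕ) : Prop :=
  ∀ k < K, Tendsto (fun n => (PowerSeries.coeff n F).coeff k / PowerSeries.coeff n (H ^ m)) atTop
    (nhds (PowerSeries.coeff k q))

lemma Asy_mul (e : ℕ) (he : 1 ≤ e) (H : PowerSeries ℝ) (h0 : PowerSeries.constantCoeff H = 1)
    (hH : PowerSeries.derivative ℝ H = H ^ (e+1)) (F G : PowerSeries (Polynomial ℝ)) (m : ℕ) (hm : 1 ≤ m)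
    (q w : PowerSeries ℝ) (K : ℕ) (hF : Asy H F m q K) (hG : Asy H G 1 w K) :
    Asy H (F * G) (m+1) (q * w) K := by
  intro k hk
  rw [PowerSeries.coeff_mul]
  have l1 := H_lit e he H h0 hH m hm
  have l2 : Tendsto (fun n => PowerSeries.coeff n (H ^ 1) / PowerSeries.coeff n (H ^ (m+1))) atTop (nhds 0) := by
    refine squeeze_zero (fun n => (div_pos ((H_ge e he H h0 hH 1 le_rfl).1 n) ((H_ge e he H h0 hH (m+1) (by omega)).1 n)).le) (fun n => ?_) l1
    have := ((H_ge e he H h0 hH (m+1) (by omega)).1 n)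
    gcongr
    clear hF l1 this
    induction m, hm using Nat.le_induction with
    | base => exact le_rfl
    | succ m hm ih =>
      refine ih.trans ?_
      rw [pow_succ, PowerSeries.coeff_mul]
      have := single_le_sum (f := fun ij : ℕ × ℕ => PowerSeries.coeff ij.1 (H ^ m) * PowerSeries.coeff ij.2 H)
        (s := antidiagonal n) (fun ij _ => (mul_pos ((H_ge e he H h0 hH m hm).1 _)
          (by simpa using (H_ge e he H h0 hH 1 le_rfl).1 ij.2)).le) (show (n,0) ∈ antidiagonal n by simp)
      simpa [h0] using this
  have : ∀ n, (PowerSeries.coeff n (F * G)).coeff k / PowerSeries.coeff n (H ^ (m+1)) =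
      ∑ ab ∈ antidiagonal k, (∑ ij ∈ antidiagonal n, (PowerSeries.coeff ij.1 F).coeff ab.1 * (PowerSeries.coeff ij.2 G).coeff ab.2) / PowerSeries.coeff n (H ^ (m+1)) := by
    intro n
    rw [PowerSeries.coeff_mul, Polynomial.finsetSum_coeff, ← sum_div, sum_comm]
    congr 1
    exact sum_congr rfl fun ij _ => Polynomial.coeff_mul _ _ _
  simp_rw [this]
  refine tendsto_finsetSum _ fun ab hab => ?_
  rw [HasAntidiagonal.mem_antidiagonal] at hab
  refine conv_asym (fun n => PowerSeries.coeff n (H ^ m)) (fun n => PowerSeries.coeff n (H ^ 1)) _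
    (fun n => (PowerSeries.coeff n F).coeff ab.1) (fun n => (PowerSeries.coeff n G).coeff ab.2) _ _
    (H_ge e he H h0 hH m hm).1 (H_ge e he H h0 hH 1 le_rfl).1 ?_ (H_ge e he H h0 hH m hm).2
    (H_ge e he H h0 hH 1 le_rfl).2 l1 l2 (hF _ (by omega)) (hG _ (by omega))
  intro n
  rw [pow_succ, PowerSeries.coeff_mul, pow_one]

lemma Asy_pow (e : ℕ) (he : 1 ≤ e) (H : PowerSeries ℝ) (h0 : PowerSeries.constantCoeff H = 1)
    (hH : PowerSeries.derivative ℝ H = H ^ (e+1)) (F : PowerSeries (Polynomial ℝ)) (m : ℕ) (hm : 1 ≤ m)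
    (q : PowerSeries ℝ) (K : ℕ) (hF : Asy H F 1 q K) :
    Asy H (F ^ m) m (q ^ m) K := by
  induction m, hm using Nat.le_induction with
  | base => simpa using hF
  | succ m hm ih => rw [pow_succ, pow_succ]; exact Asy_mul e he H h0 hH _ _ m hm _ _ K ih hF

lemma fuss (d : ℕ) (hd : 1 ≤ d) (p : ℝ) (q : PowerSeries ℝ)
    (hq : q = PowerSeries.C (1-p) + PowerSeries.C p * PowerSeries.X * q ^ d) (k : ℕ) : ∀ a : ℕ,
    ((a:ℝ) + d * k) * PowerSeries.coeff k (q ^ a) =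
      a * ((a + d * k).choose k : ℝ) * p ^ k * (1-p)^(a + (d-1) * k) := by
  induction k with
  | zero =>
    intro a
    have : PowerSeries.constantCoeff q = 1 - p := by rw [hq]; simp
    simp [this]
  | succ k ih =>
    have hd0 : (0:ℝ) < d := by exact_mod_cast hd
    intro a
    induction a with
    | zero => simp [PowerSeries.coeff_one]
    | succ a iha =>
      have e1 : PowerSeries.coeff (k+1) (q ^ (a+1)) = (1-p) * PowerSeries.coeff (k+1) (q^a) + p * PowerSeries.coeff k (q ^ (a+d)) := by
        have : q ^ (a+1) = PowerSeries.C (1-p) * q ^ a + PowerSeries.C p * (PowerSeries.X * q ^ (a+d)) := by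
          rw [pow_succ]; nth_rw 2 [hq]; ring
        rw [this, map_add, PowerSeries.coeff_C_mul, PowerSeries.coeff_C_mul, PowerSeries.coeff_succ_X_mul]
      have e2 := ih (a + d)
      obtain ⟨N, hN⟩ : ∃ N, N + 1 = a + d * (k+1) := ⟨a + d*(k+1) - 1, by
        have : 1 ≤ d * (k+1) := Nat.mul_pos hd (Nat.succ_pos k)
        omega⟩
      have i1 : a + d + d * k = N + 1 := by rw [hN]; ring
      have i2 : a + 1 + d * (k+1) = N + 2 := by linarith [hN]
      rw [← hN] at iha
      rw [i1] at e2
      rw [i2]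
      obtain ⟨c, rfl⟩ : ∃ c, d = c + 1 := ⟨d - 1, by omega⟩
      simp only [Nat.add_sub_cancel] at *
      have c1 : ((a:ℝ) + ((c+1:ℕ):ℝ) * ((k+1:ℕ):ℝ)) = N + 1 := by exact_mod_cast hN.symm
      have c2 : (((a+(c+1):ℕ):ℝ) + ((c+1:ℕ):ℝ) * (k:ℝ)) = N + 1 := by exact_mod_cast i1
      have c3 : (((a+1:ℕ):ℝ) + ((c+1:ℕ):ℝ) * ((k+1:ℕ):ℝ)) = N + 2 := by exact_mod_cast i2
      rw [c1] at iha
      rw [c2] at e2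
      rw [c3, e1]
      have hN1 : (N:ℝ) + 1 ≠ 0 := by positivity
      have b1 : ((N+2).choose (k+1) : ℝ) * (k+1) = (N+2) * ((N+1).choose k : ℝ) := by
        exact_mod_cast (Nat.add_one_mul_choose_eq (N+1) k).symm
      have b2 : ((N+1).choose (k+1) : ℝ) * (k+1) = (N + 1 - k) * ((N+1).choose k : ℝ) := by
        have hk : k ≤ N + 1 := by nlinarith
        have := Nat.choose_succ_right_eq (N+1) k
        have h2 : (((N+1) - k : ℕ) : ℝ) = N + 1 - k := by push_cast [Nat.cast_sub hk]; ring
        rw [← h2]; rw [mul_comm ((N + 1 - k : ℕ):ℝ)]; exact_mod_cast this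
      have hk1 : (k:ℝ) + 1 ≠ 0 := by positivity
      have ex1 : (1-p)^(a + (c+1) + c * k) = (1-p) * (1-p)^(a + c*(k+1)) := by rw [← pow_succ']; congr 1; ring
      have ex2 : (1-p)^(a + 1 + c * (k+1)) = (1-p) * (1-p)^(a + c*(k+1)) := by rw [← pow_succ']; congr 1; ring
      rw [ex1] at e2
      rw [ex2]
      have f1 : ((N+2).choose (k+1) : ℝ) = (N+2) * ((N+1).choose k : ℝ) / (k+1) := by rw [eq_div_iff hk1, b1]
      have f2 : ((N+1).choose (k+1) : ℝ) = (N + 1 - k) * ((N+1).choose k : ℝ) / (k+1) := by rw [eq_div_iff hk1, b2]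
      rw [f1]
      rw [f2] at iha
      have g1 := (eq_div_iff hN1).2 ((mul_comm _ _).trans iha)
      have g2 := (eq_div_iff hN1).2 ((mul_comm _ _).trans e2)
      rw [g1, g2]
      have c4 : (a:ℝ) = N + 1 - (c+1) * (k+1) := by push_cast at c1; linarith
      push_cast
      rw [c4]
      field_simp
      ring

lemma coeff_prod_tuple {A : Type*} [CommRing A] (δ n : ℕ) (F : Fin δ → PowerSeries A) :
    PowerSeries.coeff n (∏ i, F i) =
      ∑ f ∈ Finset.Nat.antidiagonalTuple δ n, ∏ i, PowerSeries.coeff (f i) (F i) := by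
  rw [PowerSeries.coeff_prod]
  refine Finset.sum_bij' (fun l _ => (l : Fin δ → ℕ)) (fun f _ => Finsupp.equivFunOnFinite.symm f) ?_ ?_ ?_ ?_ ?_
  · intro l hl
    rw [Finset.Nat.mem_antidiagonalTuple]
    exact (Finset.mem_finsuppAntidiag.1 hl).1
  · intro f hf
    rw [Finset.Nat.mem_antidiagonalTuple] at hf
    rw [Finset.mem_finsuppAntidiag]
    exact ⟨by simpa using hf, by simp⟩
  · intro l _; ext; simp
  · intro f _; ext; simp
  · intro l _; rfl

lemma poly_coeff_prod_tuple (δ n : ℕ) (F : Fin δ → Polynomial ℝ) :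
    (∏ i, F i).coeff n =
      ∑ f ∈ Finset.Nat.antidiagonalTuple δ n, ∏ i, (F i).coeff (f i) := by
  have := coeff_prod_tuple δ n (fun i => (F i : PowerSeries ℝ))
  simp only [Polynomial.coeff_coe] at this
  rw [← this, ← Polynomial.coeff_coe]
  congr 1
  exact map_prod Polynomial.coeToPowerSeries.ringHom F univ

lemma vanish (p : ℝ) (φ : ℕ → ℝ) (r : ℕ → ℕ → ℝ) (b : ℕ → ℝ) (h : clusterRec p φ r b) :
    ∀ n k : ℕ, 1 ≤ n → n < k → r n k = 0 := by
  intro n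
  induction n using Nat.strong_induction_on with
  | _ n ih =>
  intro k hn hk
  rw [h.2 n k hn (by omega)]
  refine sum_eq_zero fun δ _ => sum_eq_zero fun s _ => ?_
  refine mul_eq_zero_of_right _ (sum_eq_zero fun f hf => mul_eq_zero_of_right _ (sum_eq_zero fun g hg => ?_))
  rw [mem_filter, Finset.Nat.mem_antidiagonalTuple] at hf hg
  have hs : s.1 ≤ δ := Nat.lt_succ_iff.mp (Finset.mem_range.mp s.2)
  have hle : ∑ i : Fin s.1, f (Fin.castLE hs i) ≤ n - 1 := by
    rw [← hf.1]
    calc ∑ i : Fin s.1, f (Fin.castLE hs i) = ∑ j ∈ univ.map (Fin.castLEEmb hs), f j := by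
          rw [sum_map]; rfl
      _ ≤ _ := sum_le_sum_of_subset (subset_univ _)
  have : ∃ i : Fin s.1, f (Fin.castLE hs i) < g i := by
    by_contra! hcon
    have := Finset.sum_le_sum (s := univ) fun i _ => hcon i
    omega
  obtain ⟨i, hi⟩ := this
  have hfi : f (Fin.castLE hs i) ≤ n - 1 := le_trans
    (single_le_sum (f := fun i : Fin s.1 => f (Fin.castLE hs i)) (fun _ _ => Nat.zero_le _) (mem_univ i)) hle
  have h0 := ih (f (Fin.castLE hs i)) (by omega) (g i) (hf.2 _) hi
  refine mul_eq_zero_of_left (mul_eq_zero_of_right _ (prod_eq_zero (mem_univ i) h0)) _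

noncomputable def Rser (r : ℕ → ℕ → ℝ) : PowerSeries (Polynomial ℝ) :=
  PowerSeries.mk fun n => ∑ k ∈ Finset.Icc 1 n, Polynomial.C (r n k / (n.factorial : ℝ)) * Polynomial.X ^ k

noncomputable def Bser (b : ℕ → ℝ) : PowerSeries (Polynomial ℝ) :=
  PowerSeries.mk fun n => Polynomial.C (b n / (n.factorial : ℝ))

lemma Rser_coeff (r : ℕ → ℕ → ℝ) (n k : ℕ) :
    (PowerSeries.coeff n (Rser r)).coeff k = if k ∈ Finset.Icc 1 n then r n k / (n.factorial : ℝ) else 0 := by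
  rw [Rser, PowerSeries.coeff_mk, Polynomial.finsetSum_coeff]
  simp only [Polynomial.coeff_C_mul, Polynomial.coeff_X_pow, mul_ite, mul_one, mul_zero]
  rw [Finset.sum_ite_eq]

lemma Rser_coeff' (r : ℕ → ℕ → ℝ) (hv : ∀ n k : ℕ, 1 ≤ n → n < k → r n k = 0) (n k : ℕ) (hn : 1 ≤ n) (hk : 1 ≤ k) :
    (PowerSeries.coeff n (Rser r)).coeff k = r n k / (n.factorial : ℝ) := by
  rw [Rser_coeff]
  split_ifs with h
  · rfl
  · rw [hv n k hn (by simp at h; omega), zero_div]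

lemma term_eq (p : ℝ) (r : ℕ → ℕ → ℝ) (b : ℕ → ℝ) (hb0 : b 0 = 0)
    (hv : ∀ n k : ℕ, 1 ≤ n → n < k → r n k = 0) (N K s t : ℕ) :
    ∑ f ∈ (Finset.Nat.antidiagonalTuple (s+t) N).filter (fun f => ∀ i, 1 ≤ f i),
            ((N.factorial : ℝ) / ∏ i, ((f i).factorial : ℝ)) *
              ∑ g ∈ (Finset.Nat.antidiagonalTuple s K).filter (fun g => ∀ i, 1 ≤ g i),
                p ^ s * (1 - p) ^ t *
                  (∏ i : Fin s, r (f (Fin.castAdd t i)) (g i)) *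
                  ∏ j ∈ Finset.univ.filter (fun j : Fin (s+t) => s ≤ (j : ℕ)), b (f j)
    = (N.factorial : ℝ) * (p ^ s * (1-p)^t * (PowerSeries.coeff N (Rser r ^ s * Bser b ^ t)).coeff K) := by
  have hprod : Rser r ^ s * Bser b ^ t = ∏ i : Fin (s+t), Fin.append (fun _ : Fin s => Rser r) (fun _ : Fin t => Bser b) i := by
    rw [Fin.prod_univ_add]; simp
  rw [hprod, coeff_prod_tuple, Polynomial.finsetSum_coeff, mul_sum, mul_sum, sum_filter]
  refine sum_congr rfl fun f hf => ?_
  rw [Fin.prod_univ_add (fun i => PowerSeries.coeff (f i) (Fin.append (fun _ : Fin s => Rser r) (fun _ : Fin t => Bser b) i))]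
  simp only [Fin.append_left, Fin.append_right]
  have hB : ∏ j : Fin t, PowerSeries.coeff (f (Fin.natAdd s j)) (Bser b) =
      Polynomial.C (∏ j : Fin t, (b (f (Fin.natAdd s j)) / ((f (Fin.natAdd s j)).factorial : ℝ))) := by
    rw [map_prod]; simp [Bser]
  have hfil : ∏ j ∈ Finset.univ.filter (fun j : Fin (s+t) => s ≤ (j : ℕ)), b (f j) =
      ∏ j : Fin t, b (f (Fin.natAdd s j)) := by
    rw [prod_filter, Fin.prod_univ_add, prod_eq_one, one_mul]
    · simp
    · intro x _
      rw [if_neg]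
      simp
  rw [hB, Polynomial.coeff_mul_C, poly_coeff_prod_tuple, hfil]
  split_ifs with h1
  · rw [Fin.prod_univ_add, prod_div_distrib]
    have hR : ∑ g ∈ Finset.Nat.antidiagonalTuple s K, ∏ i : Fin s, (PowerSeries.coeff (f (Fin.castAdd t i)) (Rser r)).coeff (g i)
        = ∑ g ∈ (Finset.Nat.antidiagonalTuple s K).filter (fun g => ∀ i, 1 ≤ g i),
          (∏ i : Fin s, r (f (Fin.castAdd t i)) (g i)) / ∏ i : Fin s, ((f (Fin.castAdd t i)).factorial : ℝ) := by
      rw [sum_filter]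
      refine sum_congr rfl fun g _ => ?_
      split_ifs with h2
      · rw [← prod_div_distrib]
        exact prod_congr rfl fun i _ => Rser_coeff' r hv _ _ (h1 _) (h2 _)
      · push Not at h2
        obtain ⟨i, hi⟩ := h2
        refine prod_eq_zero (mem_univ i) ?_
        rw [Rser_coeff, if_neg]
        simp; omega
    rw [hR, mul_sum, sum_mul, mul_sum, mul_sum]
    refine sum_congr rfl fun g _ => ?_
    have hn1 : ∏ i : Fin s, ((f (Fin.castAdd t i)).factorial : ℝ) ≠ 0 :=
      prod_ne_zero_iff.2 fun i _ => by positivity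
    have hn2 : ∏ i : Fin t, ((f (Fin.natAdd s i)).factorial : ℝ) ≠ 0 :=
      prod_ne_zero_iff.2 fun i _ => by positivity
    field_simp
  · push Not at h1
    obtain ⟨i, hi⟩ := h1
    have hi0 : f i = 0 := by omega
    symm
    refine mul_eq_zero_of_right _ (mul_eq_zero_of_right _ ?_)
    induction i using Fin.addCases with
    | left i =>
      refine mul_eq_zero_of_left (sum_eq_zero fun g _ => prod_eq_zero (mem_univ i) ?_) _
      rw [Rser_coeff, if_neg]
      simp; omega
    | right i =>
      refine mul_eq_zero_of_right _ (prod_eq_zero (mem_univ i) ?_)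
      rw [hi0, hb0, zero_div]

noncomputable def Qser (p : ℝ) (r : ℕ → ℕ → ℝ) (b : ℕ → ℝ) : PowerSeries (Polynomial ℝ) :=
  PowerSeries.C (Polynomial.C p) * Rser r + PowerSeries.C (Polynomial.C (1-p)) * Bser b + 1

lemma rec_ser (d : ℕ) (p : ℝ) (r : ℕ → ℕ → ℝ) (b : ℕ → ℝ)
    (hrec : clusterRec p
      (fun δ => if δ ≤ d then ((d.factorial : ℝ) / ((d - δ).factorial : ℝ)) else 0) r b) (N K : ℕ) :
    r (N+1) (K+1) = N.factorial * (PowerSeries.coeff N (Qser p r b ^ d)).coeff K := by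
  have hv := vanish p _ r b hrec
  have hb0 : b 0 = 0 := by rw [hrec.1]; simp
  rw [hrec.2 (N+1) (K+1) (by omega) (by omega)]
  simp only [Nat.add_sub_cancel]
  set T : ℕ → ℝ := fun δ => (if δ ≤ d then ((d.choose δ : ℕ) : ℝ) else 0) * ((N.factorial : ℝ) *
    (PowerSeries.coeff N ((PowerSeries.C (Polynomial.C p) * Rser r + PowerSeries.C (Polynomial.C (1-p)) * Bser b) ^ δ)).coeff K) with hT
  have hstep : ∀ δ, (∑ s ∈ (Finset.range (δ + 1)).attach,
        (δ.choose s.1 : ℝ) * ((if δ ≤ d then ((d.factorial : ℝ) / ((d - δ).factorial : ℝ)) else 0) / (δ.factorial : ℝ)) *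
          ∑ f ∈ (Finset.Nat.antidiagonalTuple δ N).filter (fun f => ∀ i, 1 ≤ f i),
            ((N.factorial : ℝ) / ∏ i, ((f i).factorial : ℝ)) *
              ∑ g ∈ (Finset.Nat.antidiagonalTuple s.1 K).filter (fun g => ∀ i, 1 ≤ g i),
                p ^ s.1 * (1 - p) ^ (δ - s.1) *
                  (∏ i : Fin s.1,
                    r (f (Fin.castLE (Nat.lt_succ_iff.mp (Finset.mem_range.mp s.2)) i)) (g i)) *
                  ∏ j ∈ Finset.univ.filter (fun j : Fin δ => s.1 ≤ (j : ℕ)), b (f j)) = T δ := by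
    intro δ
    have hc : ((if δ ≤ d then ((d.factorial : ℝ) / ((d - δ).factorial : ℝ)) else 0) / (δ.factorial : ℝ)) =
        if δ ≤ d then ((d.choose δ : ℕ) : ℝ) else 0 := by
      split_ifs with h
      · rw [Nat.cast_choose ℝ h]; field_simp
      · simp
    rw [hc]
    simp only [hT]
    rw [add_pow, map_sum, Polynomial.finsetSum_coeff, mul_sum, mul_sum, ← Finset.sum_attach (range (δ+1))]
    refine sum_congr rfl fun s _ => ?_
    obtain ⟨s, hs⟩ := s
    obtain ⟨t, rfl⟩ : ∃ t, δ = s + t := ⟨δ - s, by simp at hs; omega⟩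
    have := term_eq p r b hb0 hv N K s t
    simp only [Nat.add_sub_cancel_left]
    refine (congrArg _ this).trans ?_
    have e : (PowerSeries.C (Polynomial.C p) * Rser r) ^ s * (PowerSeries.C (Polynomial.C (1-p)) * Bser b) ^ t * (((s+t).choose s : ℕ) : PowerSeries (Polynomial ℝ))
       = PowerSeries.C (Polynomial.C (((s+t).choose s : ℝ) * (p ^ s * (1-p)^t))) * (Rser r ^ s * Bser b ^ t) := by
      simp only [map_mul, map_pow, map_natCast]; ring
    rw [e, PowerSeries.coeff_C_mul, Polynomial.coeff_C_mul]
    ring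
  have hzero : ∀ δ, N + 1 ≤ δ → T δ = 0 := by
    intro δ hδ
    rw [← hstep]
    refine sum_eq_zero fun s _ => mul_eq_zero_of_right _ ?_
    rw [filter_eq_empty_iff.2, sum_empty]
    intro f hf hcon
    rw [Finset.Nat.mem_antidiagonalTuple] at hf
    have := Finset.sum_le_sum (s := (univ : Finset (Fin δ))) fun i _ => hcon i
    simp at this
    omega
  have hzero' : ∀ δ, d + 1 ≤ δ → T δ = 0 := by
    intro δ hδ
    simp only [hT]
    rw [if_neg (by omega), zero_mul]
  refine (sum_congr rfl fun δ _ => hstep δ).trans ?_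
  have e1 : ∑ δ ∈ range (N+1), T δ = ∑ δ ∈ range (N+1+(d+1)), T δ :=
    sum_subset (range_subset_range.2 (by omega)) fun δ _ h => hzero δ (by simpa using h)
  have e2 : ∑ δ ∈ range (d+1), T δ = ∑ δ ∈ range (N+1+(d+1)), T δ :=
    sum_subset (range_subset_range.2 (by omega)) fun δ _ h => hzero' δ (by simpa using h)
  rw [e1, ← e2, Qser, add_pow _ 1, map_sum, Polynomial.finsetSum_coeff, mul_sum]
  refine sum_congr rfl fun δ hδ => ?_
  simp only [hT]
  rw [if_pos (by simp at hδ; omega), one_pow, mul_one, mul_comm _ ((d.choose δ : ℕ) : PowerSeries (Polynomial ℝ)),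
    ← map_natCast (PowerSeries.C (R := Polynomial ℝ)), ← map_natCast (Polynomial.C (R := ℝ)), PowerSeries.coeff_C_mul, Polynomial.coeff_C_mul]
  ring

lemma main_aux (d : ℕ) (hd : 2 ≤ d) (p : ℝ)
    (r : ℕ → ℕ → ℝ) (b : ℕ → ℝ)
    (hrec : clusterRec p
      (fun δ => if δ ≤ d then ((d.factorial : ℝ) / ((d - δ).factorial : ℝ)) else 0) r b) :
    ∃ q : PowerSeries ℝ, q = PowerSeries.C (1-p) + PowerSeries.C p * PowerSeries.X * q ^ d ∧
      ∀ k, Tendsto (fun n : ℕ => r n (k+1) / b n) atTop (nhds (PowerSeries.coeff k (q ^ d))) := by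
  obtain ⟨e, rfl⟩ : ∃ e, d = e + 1 := ⟨d - 1, by omega⟩
  have he : 1 ≤ e := by omega
  have hv := vanish p _ r b hrec
  have hb0 : b 0 = 0 := by rw [hrec.1]; simp
  have hrs := rec_ser (e+1) p r b hrec
  set Q := Qser p r b with hQ
  set H : PowerSeries ℝ := PowerSeries.map (Polynomial.evalRingHom 1) Q with hHdef
  have hevR : ∀ n, (PowerSeries.coeff n (Rser r)).eval 1 = b n / (n.factorial : ℝ) := by
    intro n
    rw [Rser, PowerSeries.coeff_mk, Polynomial.eval_finsetSum, hrec.1, sum_div]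
    simp
  have hHc : ∀ n, PowerSeries.coeff n H = b n / (n.factorial : ℝ) + if n = 0 then 1 else 0 := by
    intro n
    rw [hHdef, PowerSeries.coeff_map, hQ, Qser, map_add, map_add, map_add, map_add, PowerSeries.coeff_C_mul, PowerSeries.coeff_C_mul,
      PowerSeries.coeff_one]
    simp only [map_add, map_mul, Polynomial.coe_evalRingHom, hevR, Polynomial.eval_C]
    simp only [Bser, PowerSeries.coeff_mk, Polynomial.eval_C]
    split_ifs <;> simp <;> ring
  have h0 : PowerSeries.constantCoeff H = 1 := by
    rw [← PowerSeries.coeff_zero_eq_constantCoeff_apply, hHc, hb0]; simp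
  have hHd : ∀ n, PowerSeries.coeff n (H ^ (e+1)) = b (n+1) / (n.factorial : ℝ) := by
    intro n
    have hpoly : Polynomial.C ((n:ℝ)+1) * PowerSeries.coeff (n+1) (Rser r) = Polynomial.X * PowerSeries.coeff n (Q ^ (e+1)) := by
      ext k
      rw [Polynomial.coeff_C_mul]
      rcases k with _ | k
      · rw [Rser_coeff]; simp
      · rw [Polynomial.coeff_X_mul, Rser_coeff' r hv _ _ (by omega) (by omega), hrs, Nat.factorial_succ]
        push_cast
        field_simp
    have h1 := congrArg (Polynomial.eval 1) hpoly
    rw [Polynomial.eval_mul, Polynomial.eval_mul, Polynomial.eval_C, Polynomial.eval_X, one_mul, hevR] at h1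
    rw [hHdef, ← map_pow, PowerSeries.coeff_map, Polynomial.coe_evalRingHom, ← h1, Nat.factorial_succ]
    push_cast
    field_simp
  have hH : PowerSeries.derivative ℝ H = H ^ (e+1) := by
    ext n
    rw [PowerSeries.coeff_derivative, hHd, hHc, if_neg (by omega), Nat.factorial_succ]
    push_cast
    field_simp
    ring
  have hbpos : ∀ n, 0 < b (n+1) := by
    intro n
    have := (H_ge e he H h0 hH (e+1) (by omega)).1 n
    rw [hHd] at this
    exact (div_pos_iff_of_pos_right (by positivity)).1 this
  have stepA : ∀ q k, Asy H Q 1 q (k+1) →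
      Tendsto (fun n : ℕ => r n (k+1) / b n) atTop (nhds (PowerSeries.coeff k (q ^ (e+1)))) := by
    intro q k hA
    have := Asy_pow e he H h0 hH Q (e+1) (by omega) q (k+1) hA k (by omega)
    rw [← tendsto_add_atTop_iff_nat 1]
    refine this.congr fun n => ?_
    rw [hrs, hHd]
    have := (hbpos n).ne'
    field_simp
  have base : Tendsto (fun n => (PowerSeries.coeff n Q).coeff 0 / PowerSeries.coeff n (H ^ 1)) atTop (nhds (1-p)) := by
    rw [← tendsto_add_atTop_iff_nat 1]
    refine tendsto_const_nhds.congr fun n => ?_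
    have := (hbpos n).ne'
    rw [pow_one, hHc, if_neg (by omega), hQ, Qser, map_add, map_add, PowerSeries.coeff_C_mul, PowerSeries.coeff_C_mul,
      PowerSeries.coeff_one, if_neg (by omega), Polynomial.coeff_add, Polynomial.coeff_add, Polynomial.coeff_C_mul,
      Polynomial.coeff_C_mul, Rser_coeff, if_neg (by simp), Bser, PowerSeries.coeff_mk, Polynomial.coeff_C_zero]
    simp only [Polynomial.coeff_zero, mul_zero, zero_add, add_zero]
    field_simp
  have succ : ∀ k l, Tendsto (fun n : ℕ => r n (k+1) / b n) atTop (nhds l) →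
      Tendsto (fun n => (PowerSeries.coeff n Q).coeff (k+1) / PowerSeries.coeff n (H ^ 1)) atTop (nhds (p * l)) := by
    intro k l hl
    have hl := hl.const_mul p
    rw [← tendsto_add_atTop_iff_nat 1] at hl ⊢
    refine hl.congr fun n => ?_
    have := (hbpos n).ne'
    rw [pow_one, hHc, if_neg (by omega), hQ, Qser, map_add, map_add, PowerSeries.coeff_C_mul, PowerSeries.coeff_C_mul,
      PowerSeries.coeff_one, if_neg (by omega), Polynomial.coeff_add, Polynomial.coeff_add, Polynomial.coeff_C_mul,
      Polynomial.coeff_C_mul, Rser_coeff' r hv _ _ (by omega) (by omega), Bser, PowerSeries.coeff_mk, Polynomial.coeff_C_succ]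
    simp only [Polynomial.coeff_zero, mul_zero, add_zero]
    field_simp
  have ex : ∀ k, ∃ l, Tendsto (fun n => (PowerSeries.coeff n Q).coeff k / PowerSeries.coeff n (H ^ 1)) atTop (nhds l) := by
    intro k
    induction k using Nat.strong_induction_on with
    | _ k ih =>
    rcases k with _ | k
    · exact ⟨_, base⟩
    · choose! l hl using ih
      refine ⟨_, succ k _ (stepA (PowerSeries.mk l) k fun j hj => ?_)⟩
      rw [PowerSeries.coeff_mk]
      exact hl j hj
  choose l hl using ex
  have hA : ∀ K, Asy H Q 1 (PowerSeries.mk l) K := fun K k _ => by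
    rw [PowerSeries.coeff_mk]; exact hl k
  refine ⟨PowerSeries.mk l, ?_, fun k => stepA _ k (hA _)⟩
  ext k
  rcases k with _ | k
  · rw [PowerSeries.coeff_mk, tendsto_nhds_unique (hl 0) base]; simp
  · rw [PowerSeries.coeff_mk, tendsto_nhds_unique (hl (k+1)) (succ k _ (stepA _ k (hA _))), map_add, mul_assoc,
      PowerSeries.coeff_C_mul, PowerSeries.coeff_succ_X_mul, PowerSeries.coeff_C, if_neg (by omega), zero_add]

/-- for random increasing `d`-ary trees, the probability that the root
cluster has exactly `k` vertices converges to the probability that a Galton–Watson tree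
with `Bin(d,p)` offspring distribution has total progeny `k`. -/
theorem stmt18 (d : ℕ) (hd : 2 ≤ d) (p : ℝ) (hp0 : 0 < p) (hp1 : p < 1)
    (r : ℕ → ℕ → ℝ) (b : ℕ → ℝ)
    (hrec : clusterRec p
      (fun δ => if δ ≤ d then ((d.factorial : ℝ) / ((d - δ).factorial : ℝ)) else 0) r b)
    (k : ℕ) (hk : 1 ≤ k) :
    Tendsto (fun n : ℕ => r n k / b n) atTop
      (nhds ((1 / (k : ℝ)) * ((k * d).choose (k - 1) : ℝ)
        * p ^ (k - 1) * (1 - p) ^ (k * d - k + 1))) := by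
  obtain ⟨q, hq, ht⟩ := main_aux d hd p r b hrec
  obtain ⟨k, rfl⟩ : ∃ j, k = j + 1 := ⟨k - 1, by omega⟩
  have h1 := fuss d (by omega) p q hq k d
  have hd0 : (0:ℝ) < d := by exact_mod_cast (by omega : 0 < d)
  have e1 : d + d * k = (k+1) * d := by ring
  have e2 : d + (d-1) * k = (k+1) * d - (k+1) + 1 := by
    obtain ⟨c, rfl⟩ : ∃ c, d = c + 1 := ⟨d - 1, by omega⟩
    have : (k+1) * (c+1) = (k+1) * c + (k+1) := by ring
    rw [this, Nat.add_sub_cancel, Nat.add_sub_cancel]; ring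
  rw [e1, e2] at h1
  convert ht k using 2
  rw [Nat.add_sub_cancel]
  have h2 : (d + (d:ℝ) * k) ≠ 0 := by positivity
  rw [← mul_right_inj' h2, h1]
  push_cast
  field_simp
  ring
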